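/- Key estimate for the universal uncertainty relation (pure-state form): for any bounded self-adjoint operators N and B on a complex Hilbert space H and any unit vector ψ ∈ H, |⟨ψ, (N∘B − B∘N)ψ⟩| ≤ 2·‖Nψ‖·σ(B;ψ). -/

import Mathlib

open ContinuousLinearMap

/-- The standard deviation of a bounded operator `B` in the vector state `ψ`:
`σ(B;ψ)² = ‖Bψ‖² − (re⟨ψ, Bψ⟩)²`. -/
noncomputable def stddev {H : Type*} [NormedAddCommGroup H] [InnerProductSpace ℂ H]
    (B : H →L[ℂ] H) (ψ : H) : ℝ :=
  Real.sqrt (‖B ψ‖ ^ 2 - (Complex.re (inner ℂ ψ (B ψ))) ^ 2)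

/-!
Replacing `B` by `B - c` with `c` real changes neither its symmetry nor `[N, B]`, so Cauchy–Schwarz
gives `|⟨ψ, [N, B] ψ⟩| ≤ 2 ‖N ψ‖ ‖(B - c) ψ‖`. For `c = re ⟨ψ, B ψ⟩` the last factor is the standard
deviation of `B` in `ψ`.
-/

theorem lie_sub_of_commute {A : Type*} [NonUnitalNonAssocRing A] {a c : A} (h : Commute a c)
    (b : A) : ⁅a, b - c⁆ = ⁅a, b⁆ := by
  rw [Ring.lie_def, Ring.lie_def, mul_sub, sub_mul, h.eq, sub_sub_sub_cancel_right]

section InnerProductSpace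

open RCLike
open scoped InnerProductSpace

variable {𝕜 E : Type*} [RCLike 𝕜] [SeminormedAddCommGroup E] [InnerProductSpace 𝕜 E]

theorem norm_sub_re_inner_smul_sq {x : E} (hx : ‖x‖ = 1) (y : E) :
    ‖y - (re ⟪x, y⟫_𝕜 : 𝕜) • x‖ ^ 2 = ‖y‖ ^ 2 - re ⟪x, y⟫_𝕜 ^ 2 := by
  rw [norm_sub_sq (𝕜 := 𝕜), inner_smul_right, re_ofReal_mul, inner_re_symm y x, norm_smul, hx,
    mul_one, norm_ofReal, sq_abs]
  ring

theorem norm_inner_lie_le {S T : Module.End 𝕜 E} (hS : S.IsSymmetric) (hT : T.IsSymmetric)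
    (x y : E) : ‖⟪x, ⁅S, T⁆ y⟫_𝕜‖ ≤ ‖S x‖ * ‖T y‖ + ‖T x‖ * ‖S y‖ :=
  calc
    ‖⟪x, ⁅S, T⁆ y⟫_𝕜‖ = ‖⟪S x, T y⟫_𝕜 - ⟪T x, S y⟫_𝕜‖ := by
      rw [Ring.lie_def, LinearMap.sub_apply, Module.End.mul_apply, Module.End.mul_apply,
        inner_sub_right, hS, hT]
    _ ≤ ‖⟪S x, T y⟫_𝕜‖ + ‖⟪T x, S y⟫_𝕜‖ := norm_sub_le _ _
    _ ≤ ‖S x‖ * ‖T y‖ + ‖T x‖ * ‖S y‖ :=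
      add_le_add (norm_inner_le_norm _ _) (norm_inner_le_norm _ _)

theorem norm_inner_lie_self_le_norm_sub_smul {S T : Module.End 𝕜 E} (hS : S.IsSymmetric)
    (hT : T.IsSymmetric) (c : ℝ) (x : E) :
    ‖⟪x, ⁅S, T⁆ x⟫_𝕜‖ ≤ 2 * ‖S x‖ * ‖T x - (c : 𝕜) • x‖ := by
  have hTc : (T - (c : 𝕜) • (1 : Module.End 𝕜 E)).IsSymmetric :=
    hT.sub (LinearMap.IsSymmetric.one.smul (conj_ofReal c))
  calc
    ‖⟪x, ⁅S, T⁆ x⟫_𝕜‖ = ‖⟪x, ⁅S, T - (c : 𝕜) • (1 : Module.End 𝕜 E)⁆ x⟫_𝕜‖ := by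
      rw [lie_sub_of_commute ((Commute.one_right S).smul_right (c : 𝕜))]
    _ ≤ ‖S x‖ * ‖T x - (c : 𝕜) • x‖ + ‖T x - (c : 𝕜) • x‖ * ‖S x‖ :=
      norm_inner_lie_le hS hTc x x
    _ = 2 * ‖S x‖ * ‖T x - (c : 𝕜) • x‖ := by ring

theorem commutator_bound_general {N B : Module.End 𝕜 E} (hN : N.IsSymmetric) (hB : B.IsSymmetric)
    {ψ : E} (hψ : ‖ψ‖ = 1) :
    ‖⟪ψ, ⁅N, B⁆ ψ⟫_𝕜‖ ≤ 2 * ‖N ψ‖ * √(‖B ψ‖ ^ 2 - re ⟪ψ, B ψ⟫_𝕜 ^ 2) := by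
  rw [← norm_sub_re_inner_smul_sq hψ, Real.sqrt_sq (norm_nonneg _)]
  exact norm_inner_lie_self_le_norm_sub_smul hN hB _ ψ

end InnerProductSpace

/-- Key estimate for the universal uncertainty relation (pure-state form). -/
theorem commutator_bound {H : Type*} [NormedAddCommGroup H] [InnerProductSpace ℂ H]
    [CompleteSpace H] (N B : H →L[ℂ] H) (hN : IsSelfAdjoint N) (hB : IsSelfAdjoint B)
    (ψ : H) (hψ : ‖ψ‖ = 1) :
    ‖inner ℂ ψ ((N ∘L B - B ∘L N) ψ)‖ ≤ 2 * ‖N ψ‖ * stddev B ψ :=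
  commutator_bound_general hN.isSymmetric hB.isSymmetric hψ
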